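/- Under condition (A) (E[D|X] = λ(W+R) with D antisymmetric in the exchangeable pair (X,X')), the Kolmogorov distance between the law of W and the standard normal satisfies: sup_z |P(W ≤ z) - Φ(z)| ≤ E|1 - (1/(2λ)) E[DΔ | W]| + (1/λ) E|E[D*Δ | W]| + E|R|, where Δ = W - W' and D* is any symmetric function of (X,X') with D* ≥ |D|. -/

import Mathlib

open MeasureTheory ProbabilityTheory

/-- The standard normal distribution function. -/
noncomputable def stdNormalCDF (z : ℝ) : ℝ :=
  (ProbabilityTheory.gaussianReal 0 1 (Set.Iic z)).toReal

/-!
Stein's method. The bounded solution `f` of `f'(w) - w f(w) = 1_{w ≤ z} - Φ(z)` turns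
`P(W ≤ z) - Φ(z)` into `E[f'(W)] - E[W f(W)]`, and by exchangeability
`2λ E[(W + R) f(W)] = E[(f(W) - f(W')) D]`. Replacing `f(W) - f(W')` by `f'(W) Δ` leaves the term
`E[f'(W) (1 - DΔ / (2λ))]`. The derivative `f'(w) = w f(w) - Φ(z) + 1_{w ≤ z}` is a difference of
nondecreasing functions whose sum `K` is, up to a constant, `w f(w) + 1_{z < w}`, so the error of
this replacement is at most `Δ (K(W) - K(W'))`. Multiplied by `|D| ≤ D*`, it is a difference over
the pair times the antisymmetric `D*Δ`, so exchangeability gives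
`E[D*Δ (K(W) - K(W'))] = 2 E[K(W) D*Δ]`, and conditioning on `W` keeps the absolute value outside
the conditional expectation of `D*Δ`.
-/

open Set Filter Topology

/-- The standard normal density. -/
noncomputable def stdNormalPDF : ℝ → ℝ := gaussianPDFReal 0 1

lemma stdNormalPDF_eq (w : ℝ) : stdNormalPDF w = (√(2 * Real.pi))⁻¹ * Real.exp (-w ^ 2 / 2) := by
  simp [stdNormalPDF, gaussianPDFReal]

lemma stdNormalPDF_pos (w : ℝ) : 0 < stdNormalPDF w := gaussianPDFReal_pos _ _ _ one_ne_zero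

lemma stdNormalPDF_neg (w : ℝ) : stdNormalPDF (-w) = stdNormalPDF w := by
  simp only [stdNormalPDF_eq, neg_sq]

lemma stdNormalPDF_le_half (w : ℝ) : stdNormalPDF w ≤ 1 / 2 := by
  have hsqrt : 2 ≤ √(2 * Real.pi) := Real.le_sqrt_of_sq_le (by linarith [Real.two_le_pi])
  have hexp : Real.exp (-w ^ 2 / 2) ≤ 1 := Real.exp_le_one_iff.2 (by linarith [sq_nonneg w])
  calc stdNormalPDF w = (√(2 * Real.pi))⁻¹ * Real.exp (-w ^ 2 / 2) := stdNormalPDF_eq w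
    _ ≤ 2⁻¹ * 1 := by gcongr
    _ = 1 / 2 := by norm_num

lemma hasDerivAt_stdNormalPDF (w : ℝ) : HasDerivAt stdNormalPDF (-w * stdNormalPDF w) w := by
  have hexponent : HasDerivAt (fun x : ℝ ↦ -x ^ 2 / 2) (-w) w :=
    ((hasDerivAt_pow 2 w).neg.div_const 2).congr_deriv (by norm_num; ring)
  rw [funext stdNormalPDF_eq]
  exact (hexponent.exp.const_mul _).congr_deriv (by ring)

lemma continuous_stdNormalPDF : Continuous stdNormalPDF :=
  continuous_iff_continuousAt.2 fun w ↦ (hasDerivAt_stdNormalPDF w).continuousAt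

lemma integrable_pow_mul_stdNormalPDF (n : ℕ) : Integrable fun x ↦ x ^ n * stdNormalPDF x := by
  have hn : (-1 : ℝ) < n := by linarith [n.cast_nonneg (α := ℝ)]
  have h := (integrable_rpow_mul_exp_neg_mul_sq (b := 1 / 2) (by norm_num) hn).const_mul
    (√(2 * Real.pi))⁻¹
  refine h.congr (ae_of_all _ fun x ↦ ?_)
  simp only [Real.rpow_natCast, stdNormalPDF_eq]
  ring_nf

lemma integrable_stdNormalPDF : Integrable stdNormalPDF := integrable_gaussianPDFReal 0 1

lemma integrable_mul_stdNormalPDF : Integrable fun x ↦ x * stdNormalPDF x := by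
  simpa only [pow_one] using integrable_pow_mul_stdNormalPDF 1

lemma tendsto_stdNormalPDF_atTop : Tendsto stdNormalPDF atTop (𝓝 0) := by
  refine tendsto_zero_of_hasDerivAt_of_integrableOn_Ioi (a := 0)
    (fun w _ ↦ hasDerivAt_stdNormalPDF w) ?_ integrable_stdNormalPDF.integrableOn
  simpa only [neg_mul] using! integrable_mul_stdNormalPDF.neg.integrableOn

lemma stdNormalCDF_eq_cdf : stdNormalCDF = cdf (gaussianReal 0 1) :=
  funext fun w ↦ (cdf_eq_real _ w).symm

lemma stdNormalCDF_nonneg (w : ℝ) : 0 ≤ stdNormalCDF w := ENNReal.toReal_nonneg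

lemma stdNormalCDF_le_one (w : ℝ) : stdNormalCDF w ≤ 1 := stdNormalCDF_eq_cdf ▸ cdf_le_one _ w

lemma monotone_stdNormalCDF : Monotone stdNormalCDF := stdNormalCDF_eq_cdf ▸ monotone_cdf _

lemma tendsto_stdNormalCDF_atTop : Tendsto stdNormalCDF atTop (𝓝 1) :=
  stdNormalCDF_eq_cdf ▸ tendsto_cdf_atTop _

lemma stdNormalCDF_eq_integral (w : ℝ) : stdNormalCDF w = ∫ x in Iic w, stdNormalPDF x := by
  rw [stdNormalCDF, gaussianReal_apply_eq_integral 0 one_ne_zero, ENNReal.toReal_ofReal]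
  · rfl
  · exact integral_nonneg fun x ↦ gaussianPDFReal_nonneg _ _ _

lemma one_sub_stdNormalCDF_eq_integral (w : ℝ) :
    1 - stdNormalCDF w = ∫ x in Ioi w, stdNormalPDF x := by
  have htotal : ∫ x, stdNormalPDF x = 1 := integral_gaussianPDFReal_eq_one 0 one_ne_zero
  have hsplit := intervalIntegral.integral_Iic_add_Ioi (b := w)
    integrable_stdNormalPDF.integrableOn integrable_stdNormalPDF.integrableOn
  rw [stdNormalCDF_eq_integral]
  linarith

lemma stdNormalCDF_neg (w : ℝ) : stdNormalCDF (-w) = 1 - stdNormalCDF w := by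
  rw [stdNormalCDF_eq_integral, one_sub_stdNormalCDF_eq_integral, ← integral_comp_neg_Ioi]
  simp only [stdNormalPDF_neg]

lemma hasDerivAt_stdNormalCDF (w : ℝ) : HasDerivAt stdNormalCDF (stdNormalPDF w) w := by
  have hcdf : stdNormalCDF = fun w ↦ stdNormalCDF 0 + ∫ x in (0 : ℝ)..w, stdNormalPDF x := by
    funext w
    rw [← intervalIntegral.integral_Iic_sub_Iic integrable_stdNormalPDF.integrableOn
      integrable_stdNormalPDF.integrableOn, stdNormalCDF_eq_integral, stdNormalCDF_eq_integral]
    ring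
  rw [hcdf]
  exact (continuous_stdNormalPDF.integral_hasStrictDerivAt 0 w).hasDerivAt.const_add _

lemma continuous_stdNormalCDF : Continuous stdNormalCDF :=
  continuous_iff_continuousAt.2 fun w ↦ (hasDerivAt_stdNormalCDF w).continuousAt

lemma two_mul_stdNormalCDF_sub_one_le {w : ℝ} (hw : 0 ≤ w) : 2 * stdNormalCDF w - 1 ≤ w := by
  have hzero : stdNormalCDF 0 = 1 - stdNormalCDF 0 := by simpa using stdNormalCDF_neg 0
  have hmvt : stdNormalCDF w - stdNormalCDF 0 ≤ 1 / 2 * (w - 0) :=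
    image_sub_le_mul_sub_of_deriv_le
      (fun x ↦ (hasDerivAt_stdNormalCDF x).differentiableAt)
      (fun x ↦ (hasDerivAt_stdNormalCDF x).deriv.trans_le (stdNormalPDF_le_half x)) hw
  linarith

-- The difference of the two sides is even, decreasing on `[0, ∞)` and vanishes at infinity.
lemma stdNormalCDF_mul_one_sub_le_stdNormalPDF (w : ℝ) :
    stdNormalCDF w * (1 - stdNormalCDF w) ≤ stdNormalPDF w := by
  wlog hw : 0 ≤ w generalizing w
  · have h := this (-w) (by linarith)
    rw [stdNormalCDF_neg, stdNormalPDF_neg] at h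
    linarith
  let gap : ℝ → ℝ := fun x ↦ stdNormalPDF x - stdNormalCDF x * (1 - stdNormalCDF x)
  have hderiv (x : ℝ) : HasDerivAt gap (stdNormalPDF x * (2 * stdNormalCDF x - 1 - x)) x :=
    ((hasDerivAt_stdNormalPDF x).sub ((hasDerivAt_stdNormalCDF x).mul
      ((hasDerivAt_stdNormalCDF x).const_sub 1))).congr_deriv (by ring)
  have hanti : AntitoneOn gap (Ici 0) := by
    refine antitoneOn_of_hasDerivWithinAt_nonpos (convex_Ici 0)
      (fun x _ ↦ (hderiv x).continuousAt.continuousWithinAt)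
      (fun x _ ↦ (hderiv x).hasDerivWithinAt) fun x hx ↦ ?_
    have hx : 0 ≤ x := interior_subset hx
    exact mul_nonpos_of_nonneg_of_nonpos (stdNormalPDF_pos x).le
      (by linarith [two_mul_stdNormalCDF_sub_one_le hx])
  have hlim : Tendsto gap atTop (𝓝 0) := by
    simpa using tendsto_stdNormalPDF_atTop.sub
      (tendsto_stdNormalCDF_atTop.mul (tendsto_stdNormalCDF_atTop.const_sub 1))
  have hgap : 0 ≤ gap w := le_of_tendsto hlim <| by
    filter_upwards [eventually_ge_atTop w] with x hx using hanti hw (hw.trans hx) hx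
  exact sub_nonneg.1 hgap

lemma integral_Ioi_mul_stdNormalPDF (w : ℝ) :
    ∫ x in Ioi w, x * stdNormalPDF x = stdNormalPDF w := by
  have h := integral_Ioi_of_hasDerivAt_of_tendsto' (a := w) (f := fun x ↦ -stdNormalPDF x)
    (fun x _ ↦ (hasDerivAt_stdNormalPDF x).neg.congr_deriv (by ring))
    integrable_mul_stdNormalPDF.integrableOn tendsto_stdNormalPDF_atTop.neg
  simpa using h

lemma integral_Ioi_sq_mul_stdNormalPDF (w : ℝ) :
    ∫ x in Ioi w, x ^ 2 * stdNormalPDF x = w * stdNormalPDF w + (1 - stdNormalCDF w) := by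
  have hsq := (integrable_pow_mul_stdNormalPDF 2).integrableOn (s := Ioi w)
  have hone := integrable_stdNormalPDF.integrableOn (s := Ioi w)
  have hderiv (x : ℝ) : HasDerivAt (fun x ↦ x * stdNormalPDF x)
      (stdNormalPDF x - x ^ 2 * stdNormalPDF x) x :=
    ((hasDerivAt_id' x).mul (hasDerivAt_stdNormalPDF x)).congr_deriv (by ring)
  have hlim : Tendsto (fun x ↦ x * stdNormalPDF x) atTop (𝓝 0) :=
    tendsto_zero_of_hasDerivAt_of_integrableOn_Ioi (a := w) (fun x _ ↦ hderiv x)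
      (hone.sub hsq) integrable_mul_stdNormalPDF.integrableOn
  have h := integral_Ioi_of_hasDerivAt_of_tendsto' (fun x _ ↦ hderiv x) (hone.sub hsq) hlim
  rw [integral_sub hone hsq, ← one_sub_stdNormalCDF_eq_integral] at h
  linarith

-- The gap between the two sides is `∫ x in Ioi w, (x - w) * stdNormalPDF x`.
lemma mul_one_sub_stdNormalCDF_le_stdNormalPDF (w : ℝ) :
    w * (1 - stdNormalCDF w) ≤ stdNormalPDF w := by
  rw [one_sub_stdNormalCDF_eq_integral, ← integral_const_mul, ← integral_Ioi_mul_stdNormalPDF]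
  exact setIntegral_mono_on (integrable_stdNormalPDF.integrableOn.const_mul w)
    integrable_mul_stdNormalPDF.integrableOn measurableSet_Ioi
    fun x hx ↦ mul_le_mul_of_nonneg_right hx.le (stdNormalPDF_pos x).le

-- The gap between the two sides is `∫ x in Ioi w, (x - w) ^ 2 * stdNormalPDF x`.
lemma mul_stdNormalPDF_le_mul_one_sub_stdNormalCDF (w : ℝ) :
    w * stdNormalPDF w ≤ (1 + w ^ 2) * (1 - stdNormalCDF w) := by
  have hsq := (integrable_pow_mul_stdNormalPDF 2).integrableOn (s := Ioi w)
  have hone := integrable_stdNormalPDF.integrableOn (s := Ioi w)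
  have hid := integrable_mul_stdNormalPDF.integrableOn (s := Ioi w)
  have hmono : ∫ x in Ioi w, 2 * w * (x * stdNormalPDF x) ≤
      ∫ x in Ioi w, (x ^ 2 * stdNormalPDF x + w ^ 2 * stdNormalPDF x) := by
    refine integral_mono (hid.const_mul _) (hsq.add (hone.const_mul _)) fun x ↦ ?_
    linarith [mul_nonneg (sq_nonneg (x - w)) (stdNormalPDF_pos x).le]
  rw [integral_add hsq (hone.const_mul _), integral_const_mul, integral_const_mul,
    integral_Ioi_mul_stdNormalPDF, integral_Ioi_sq_mul_stdNormalPDF,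
    ← one_sub_stdNormalCDF_eq_integral] at hmono
  linarith

/-- The Mills ratio of the standard normal law: its upper tail divided by its density. -/
noncomputable def millsRatio (w : ℝ) : ℝ := (1 - stdNormalCDF w) / stdNormalPDF w

lemma millsRatio_neg (w : ℝ) : millsRatio (-w) = stdNormalCDF w / stdNormalPDF w := by
  rw [millsRatio, stdNormalCDF_neg, stdNormalPDF_neg, sub_sub_cancel]

lemma hasDerivAt_millsRatio (w : ℝ) : HasDerivAt millsRatio (w * millsRatio w - 1) w := by
  have hpdf := (stdNormalPDF_pos w).ne'
  refine (((hasDerivAt_stdNormalCDF w).const_sub 1).div (hasDerivAt_stdNormalPDF w)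
    hpdf).congr_deriv ?_
  rw [millsRatio]
  field_simp
  ring

lemma mul_millsRatio_le_one (w : ℝ) : w * millsRatio w ≤ 1 := by
  rw [millsRatio, ← mul_div_assoc, div_le_one (stdNormalPDF_pos w)]
  exact mul_one_sub_stdNormalCDF_le_stdNormalPDF w

lemma monotone_mul_millsRatio : Monotone fun w ↦ w * millsRatio w := by
  have hderiv (w : ℝ) : HasDerivAt (fun w ↦ w * millsRatio w)
      ((1 + w ^ 2) * millsRatio w - w) w :=
    ((hasDerivAt_id' w).mul (hasDerivAt_millsRatio w)).congr_deriv (by ring)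
  refine monotone_of_hasDerivAt_nonneg hderiv fun w ↦ ?_
  rw [Pi.zero_apply, sub_nonneg, millsRatio, ← mul_div_assoc, le_div_iff₀ (stdNormalPDF_pos w)]
  exact mul_stdNormalPDF_le_mul_one_sub_stdNormalCDF w

/-- The bounded solution of Stein's equation `f'(w) - w f(w) = 1_{w ≤ z} - Φ(z)`. The usual
two-branch formula is written uniformly by means of `min` and `max`. -/
noncomputable def steinSolution (z w : ℝ) : ℝ :=
  stdNormalCDF (min w z) * (1 - stdNormalCDF (max w z)) / stdNormalPDF w

section SteinSolution

variable {z w : ℝ}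

lemma steinSolution_of_le (h : w ≤ z) :
    steinSolution z w = (1 - stdNormalCDF z) * millsRatio (-w) := by
  rw [steinSolution, min_eq_left h, max_eq_right h, millsRatio_neg]
  ring

lemma steinSolution_of_ge (h : z ≤ w) :
    steinSolution z w = stdNormalCDF z * millsRatio w := by
  rw [steinSolution, min_eq_right h, max_eq_left h, millsRatio, mul_div_assoc]

lemma continuous_steinSolution (z : ℝ) : Continuous (steinSolution z) := by
  unfold steinSolution
  exact ((continuous_stdNormalCDF.comp (by fun_prop)).mul
    (continuous_const.sub (continuous_stdNormalCDF.comp (by fun_prop)))).div₀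
    continuous_stdNormalPDF fun w ↦ (stdNormalPDF_pos w).ne'

lemma abs_steinSolution_le_one (z w : ℝ) : |steinSolution z w| ≤ 1 := by
  have hlower : 0 ≤ stdNormalCDF (min w z) := stdNormalCDF_nonneg _
  have hupper : 0 ≤ 1 - stdNormalCDF (max w z) := sub_nonneg.2 (stdNormalCDF_le_one _)
  rw [steinSolution, abs_of_nonneg (div_nonneg (mul_nonneg hlower hupper) (stdNormalPDF_pos w).le),
    div_le_one (stdNormalPDF_pos w)]
  calc stdNormalCDF (min w z) * (1 - stdNormalCDF (max w z))
      ≤ stdNormalCDF w * (1 - stdNormalCDF w) :=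
        mul_le_mul (monotone_stdNormalCDF (min_le_left w z))
          (sub_le_sub_left (monotone_stdNormalCDF (le_max_left w z)) 1) hupper
          (stdNormalCDF_nonneg w)
    _ ≤ stdNormalPDF w := stdNormalCDF_mul_one_sub_le_stdNormalPDF w

lemma monotone_mul_steinSolution (z : ℝ) : Monotone fun w ↦ w * steinSolution z w := by
  refine MonotoneOn.Iic_union_Ici (a := z) (fun v hv w hw hvw ↦ ?_) (fun v hv w hw hvw ↦ ?_)
  · have h := mul_le_mul_of_nonneg_left (monotone_mul_millsRatio (neg_le_neg hvw))
      (sub_nonneg.2 (stdNormalCDF_le_one z))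
    simp only [steinSolution_of_le (mem_Iic.1 hv), steinSolution_of_le (mem_Iic.1 hw)]
    linarith
  · have h := mul_le_mul_of_nonneg_left (monotone_mul_millsRatio hvw) (stdNormalCDF_nonneg z)
    simp only [steinSolution_of_ge (mem_Ici.1 hv), steinSolution_of_ge (mem_Ici.1 hw)]
    linarith

lemma mul_steinSolution_mem_Icc (z w : ℝ) :
    w * steinSolution z w ∈ Icc (stdNormalCDF z - 1) (stdNormalCDF z) := by
  constructor
  · refine le_trans ?_ (monotone_mul_steinSolution z (min_le_left w z))
    have h := mul_le_mul_of_nonneg_left (mul_millsRatio_le_one (-min w z))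
      (sub_nonneg.2 (stdNormalCDF_le_one z))
    simp only [steinSolution_of_le (min_le_right w z)]
    linarith
  · refine (monotone_mul_steinSolution z (le_max_left w z)).trans ?_
    have h := mul_le_mul_of_nonneg_left (mul_millsRatio_le_one (max w z)) (stdNormalCDF_nonneg z)
    simp only [steinSolution_of_ge (le_max_right w z)]
    linarith

/-- The derivative of `steinSolution z` away from the kink at `z`, where Stein's equation is used
to assign a value. -/
noncomputable def steinDeriv (z w : ℝ) : ℝ :=
  w * steinSolution z w + (Iic z).indicator 1 w - stdNormalCDF z

/-- A nondecreasing function whose increments dominate those of `steinDeriv z`: the decreasing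
jump `1_{w ≤ z}` of the latter is replaced by the increasing jump `1_{z < w}`. -/
noncomputable def steinEnvelope (z w : ℝ) : ℝ :=
  w * steinSolution z w + (Ioi z).indicator 1 w - stdNormalCDF z

lemma abs_steinDeriv_le_one (z w : ℝ) : |steinDeriv z w| ≤ 1 := by
  obtain ⟨hlower, hupper⟩ := mul_steinSolution_mem_Icc z w
  rw [steinDeriv, indicator_apply, Pi.one_apply, abs_le]
  split_ifs <;> constructor <;> linarith [stdNormalCDF_nonneg z, stdNormalCDF_le_one z]

lemma abs_steinEnvelope_le_one (z w : ℝ) : |steinEnvelope z w| ≤ 1 := by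
  obtain ⟨hlower, hupper⟩ := mul_steinSolution_mem_Icc z w
  rw [steinEnvelope, indicator_apply, Pi.one_apply, abs_le]
  split_ifs <;> constructor <;> linarith [stdNormalCDF_nonneg z, stdNormalCDF_le_one z]

lemma measurable_steinDeriv (z : ℝ) : Measurable (steinDeriv z) :=
  ((measurable_id.mul (continuous_steinSolution z).measurable).add
    (measurable_one.indicator measurableSet_Iic)).sub_const _

lemma measurable_steinEnvelope (z : ℝ) : Measurable (steinEnvelope z) :=
  ((measurable_id.mul (continuous_steinSolution z).measurable).add
    (measurable_one.indicator measurableSet_Ioi)).sub_const _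

lemma hasDerivAt_steinSolution (h : w ≠ z) :
    HasDerivAt (steinSolution z) (steinDeriv z w) w := by
  rcases lt_or_gt_of_ne h with h | h
  · have hbranch : steinSolution z =ᶠ[𝓝 w] fun x ↦ (1 - stdNormalCDF z) * millsRatio (-x) := by
      filter_upwards [Iio_mem_nhds h] with x hx using steinSolution_of_le (le_of_lt hx)
    refine HasDerivAt.congr_of_eventuallyEq ?_ hbranch
    refine (((hasDerivAt_millsRatio (-w)).comp w (hasDerivAt_neg w)).const_mul _).congr_deriv ?_
    rw [steinDeriv, indicator_of_mem (mem_Iic.2 h.le), steinSolution_of_le h.le, Pi.one_apply]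
    ring
  · have hbranch : steinSolution z =ᶠ[𝓝 w] fun x ↦ stdNormalCDF z * millsRatio x := by
      filter_upwards [Ioi_mem_nhds h] with x hx using steinSolution_of_ge (le_of_lt hx)
    refine HasDerivAt.congr_of_eventuallyEq ?_ hbranch
    refine ((hasDerivAt_millsRatio w).const_mul _).congr_deriv ?_
    rw [steinDeriv, indicator_of_notMem (notMem_Iic.2 h), steinSolution_of_ge h.le]
    ring

lemma abs_sub_sub_mul_le_of_hasDerivAt_sub_monotone {f g h : ℝ → ℝ} {s : Set ℝ}
    (hs : s.Countable) (hf : Continuous f) (hg : Monotone g) (hh : Monotone h)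
    (hderiv : ∀ x ∉ s, HasDerivAt f (g x - h x) x) (a b : ℝ) :
    |f b - f a - (b - a) * (g b - h b)| ≤ (b - a) * (g b + h b - (g a + h a)) := by
  have hint : IntervalIntegrable (fun x ↦ g x - h x) volume a b :=
    hg.intervalIntegrable.sub hh.intervalIntegrable
  have hftc : ∫ x in a..b, ((g x - h x) - (g b - h b)) =
      f b - f a - (b - a) * (g b - h b) := by
    rw [intervalIntegral.integral_sub hint intervalIntegrable_const,
      intervalIntegral.integral_const, smul_eq_mul,
      integral_eq_of_hasDerivAt_off_countable f _ hs hf.continuousOn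
        (fun x hx ↦ hderiv x hx.2) hint]
  have hbound : ∀ x ∈ uIoc a b,
      ‖(g x - h x) - (g b - h b)‖ ≤ |g b + h b - (g a + h a)| := by
    intro x hx
    rw [Real.norm_eq_abs]
    rcases mem_uIoc.1 hx with ⟨hax, hxb⟩ | ⟨hbx, hxa⟩
    · refine le_trans (abs_le.2 ⟨?_, ?_⟩) (le_abs_self _) <;>
        linarith [hg hax.le, hg hxb, hh hax.le, hh hxb]
    · refine le_trans (abs_le.2 ⟨?_, ?_⟩) (neg_le_abs _) <;>
        linarith [hg hbx.le, hg hxa, hh hbx.le, hh hxa]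
  have hsum : Monotone fun x ↦ g x + h x := hg.add hh
  calc |f b - f a - (b - a) * (g b - h b)|
      ≤ |g b + h b - (g a + h a)| * |b - a| := by
        rw [← hftc]
        exact intervalIntegral.norm_integral_le_of_norm_le_const hbound
    _ = (b - a) * (g b + h b - (g a + h a)) := by
        rcases le_total a b with hab | hba
        · rw [abs_of_nonneg (sub_nonneg.2 (hsum hab)), abs_of_nonneg (sub_nonneg.2 hab), mul_comm]
        · rw [abs_of_nonpos (sub_nonpos.2 (hsum hba)), abs_of_nonpos (sub_nonpos.2 hba)]
          ring

lemma abs_steinSolution_sub_sub_mul_le (z v w : ℝ) :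
    |steinSolution z w - steinSolution z v - (w - v) * steinDeriv z w| ≤
      (w - v) * (steinEnvelope z w - steinEnvelope z v) := by
  have hjump : Monotone ((Ioi z).indicator (1 : ℝ → ℝ)) := by
    intro x y hxy
    simp only [indicator_apply, mem_Ioi, Pi.one_apply]
    split_ifs <;> linarith
  have hderiv (x : ℝ) : steinDeriv z x =
      x * steinSolution z x + (1 - stdNormalCDF z) - (Ioi z).indicator 1 x := by
    rw [steinDeriv, ← compl_Iic, indicator_compl]
    simp only [Pi.sub_apply, Pi.one_apply]
    ring
  have h := abs_sub_sub_mul_le_of_hasDerivAt_sub_monotone (countable_singleton z)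
    (continuous_steinSolution z) ((monotone_mul_steinSolution z).add_const (1 - stdNormalCDF z))
    hjump (fun x hx ↦ hderiv x ▸ hasDerivAt_steinSolution hx) v w
  rw [← hderiv] at h
  refine h.trans_eq ?_
  rw [steinEnvelope, steinEnvelope]
  ring

end SteinSolution

section ConditionalExpectation

variable {Ω : Type*} {m mΩ : MeasurableSpace Ω} {μ : Measure Ω}
  {D R V W Y : Ω → ℝ} {l C : ℝ}

lemma abs_integral_mul_le_of_norm_le (hVC : ∀ᵐ ω ∂μ, ‖V ω‖ ≤ C) (hY : Integrable Y μ) :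
    |∫ ω, V ω * Y ω ∂μ| ≤ C * ∫ ω, |Y ω| ∂μ := by
  rw [← integral_const_mul, ← Real.norm_eq_abs]
  refine norm_integral_le_of_norm_le (hY.abs.const_mul C) ?_
  filter_upwards [hVC] with ω hω
  rw [norm_mul]
  exact mul_le_mul_of_nonneg_right hω (abs_nonneg _)

lemma integrable_of_condExp_eq_const_mul_add (hl : l ≠ 0)
    (hlin : μ[D | m] =ᵐ[μ] fun ω ↦ l * (W ω + R ω)) (hR : Integrable R μ) :
    Integrable W μ := by
  refine (((integrable_condExp (f := D) (m := m)).const_mul l⁻¹).sub hR).congr ?_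
  filter_upwards [hlin] with ω hω
  rw [Pi.sub_apply, hω]
  field_simp
  ring

variable [IsFiniteMeasure μ]

lemma integral_mul_condExp_of_norm_le (hm : m ≤ mΩ) (hV : StronglyMeasurable[m] V)
    (hVC : ∀ᵐ ω ∂μ, ‖V ω‖ ≤ C) (hY : Integrable Y μ) :
    ∫ ω, V ω * (μ[Y | m]) ω ∂μ = ∫ ω, V ω * Y ω ∂μ :=
  (integral_congr_ae (condExp_stronglyMeasurable_mul_of_bound hm hV hY C hVC)).symm.trans
    (integral_condExp hm)

lemma integral_mul_le_integral_abs_condExp (hm : m ≤ mΩ) (hV : StronglyMeasurable[m] V)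
    (hVC : ∀ᵐ ω ∂μ, ‖V ω‖ ≤ C) (hY : Integrable Y μ) :
    ∫ ω, V ω * Y ω ∂μ ≤ C * ∫ ω, |(μ[Y | m]) ω| ∂μ :=
  calc ∫ ω, V ω * Y ω ∂μ = ∫ ω, V ω * (μ[Y | m]) ω ∂μ :=
        (integral_mul_condExp_of_norm_le hm hV hVC hY).symm
    _ ≤ |∫ ω, V ω * (μ[Y | m]) ω ∂μ| := le_abs_self _
    _ ≤ C * ∫ ω, |(μ[Y | m]) ω| ∂μ := abs_integral_mul_le_of_norm_le hVC integrable_condExp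

lemma abs_integral_sub_const_mul_integral_le (hm : m ≤ mΩ) (hV : StronglyMeasurable[m] V)
    (hVC : ∀ᵐ ω ∂μ, ‖V ω‖ ≤ C) (hY : Integrable Y μ) (c : ℝ) :
    |∫ ω, V ω ∂μ - c * ∫ ω, V ω * Y ω ∂μ| ≤ C * ∫ ω, |1 - c * (μ[Y | m]) ω| ∂μ := by
  have hVint : Integrable V μ := .of_bound (hV.mono hm).aestronglyMeasurable C hVC
  have hVY : Integrable (fun ω ↦ V ω * (μ[Y | m]) ω) μ :=
    integrable_condExp.bdd_mul (hV.mono hm).aestronglyMeasurable hVC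
  have hrepr : ∫ ω, V ω ∂μ - c * ∫ ω, V ω * Y ω ∂μ =
      ∫ ω, V ω * (1 - c * (μ[Y | m]) ω) ∂μ := by
    rw [← integral_mul_condExp_of_norm_le hm hV hVC hY, ← integral_const_mul,
      ← integral_sub hVint (hVY.const_mul c)]
    exact integral_congr_ae (ae_of_all _ fun ω ↦ by ring)
  rw [hrepr]
  exact abs_integral_mul_le_of_norm_le hVC
    ((integrable_const 1).sub (integrable_condExp.const_mul c))

lemma integral_mul_of_condExp_eq_const_mul_add (hm : m ≤ mΩ) (hV : StronglyMeasurable[m] V)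
    (hVC : ∀ᵐ ω ∂μ, ‖V ω‖ ≤ C) (hlin : μ[D | m] =ᵐ[μ] fun ω ↦ l * (W ω + R ω))
    (hD : Integrable D μ) (hW : Integrable W μ) (hR : Integrable R μ) :
    ∫ ω, V ω * D ω ∂μ = l * (∫ ω, V ω * W ω ∂μ + ∫ ω, V ω * R ω ∂μ) := by
  have hVm := (hV.mono hm).aestronglyMeasurable (μ := μ)
  rw [← integral_mul_condExp_of_norm_le hm hV hVC hD,
    ← integral_add (hW.bdd_mul hVm hVC) (hR.bdd_mul hVm hVC), ← integral_const_mul]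
  refine integral_congr_ae ?_
  filter_upwards [hlin] with ω hω
  rw [hω]
  ring

lemma abs_integral_sub_integral_mul_le_of_condExp {S T : Ω → ℝ} {f f' K : ℝ → ℝ} {A B : ℝ}
    (hm : m ≤ mΩ) (hWm : Measurable[m] W) (hl : 0 < l)
    (hlin : μ[D | m] =ᵐ[μ] fun ω ↦ l * (W ω + R ω)) (hD : Integrable D μ)
    (hR : Integrable R μ) (hT : Integrable T μ) (hS : Integrable S μ)
    (hf : Measurable f) (hf' : Measurable f') (hK : Measurable K)
    (hfA : ∀ w, |f w| ≤ A) (hfB : ∀ w, |f' w| ≤ B) (hKC : ∀ w, |K w| ≤ C)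
    (hswap : |2 * ∫ ω, f (W ω) * D ω ∂μ - ∫ ω, f' (W ω) * T ω ∂μ|
      ≤ 2 * ∫ ω, K (W ω) * S ω ∂μ) :
    |∫ ω, f' (W ω) ∂μ - ∫ ω, f (W ω) * W ω ∂μ| ≤
      B * (∫ ω, |1 - 1 / (2 * l) * (μ[T | MeasurableSpace.comap W inferInstance]) ω| ∂μ)
        + C * (1 / l * ∫ ω, |(μ[S | MeasurableSpace.comap W inferInstance]) ω| ∂μ)
        + A * ∫ ω, |R ω| ∂μ := by
  have hσ : MeasurableSpace.comap W inferInstance ≤ mΩ := hWm.comap_le.trans hm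
  have hWσ : Measurable[MeasurableSpace.comap W inferInstance] W := comap_measurable W
  have hfbound : ∀ᵐ ω ∂μ, ‖f (W ω)‖ ≤ A := ae_of_all _ fun ω ↦ hfA _
  have hregression := integral_mul_of_condExp_eq_const_mul_add hm
    (hf.comp hWm).stronglyMeasurable hfbound hlin hD
    (integrable_of_condExp_eq_const_mul_add hl.ne' hlin hR) hR
  have hmain := abs_integral_sub_const_mul_integral_le hσ
    (hf'.comp hWσ).stronglyMeasurable (ae_of_all _ fun ω ↦ hfB _) hT (1 / (2 * l))
  have herror := abs_integral_mul_le_of_norm_le hfbound hR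
  have hremainder := integral_mul_le_integral_abs_condExp hσ
    (hK.comp hWσ).stronglyMeasurable (ae_of_all _ fun ω ↦ hKC _) hS
  simp only [Function.comp_apply] at hregression hmain hremainder
  have hscaled : |1 / (2 * l) * (2 * ∫ ω, f (W ω) * D ω ∂μ - ∫ ω, f' (W ω) * T ω ∂μ)|
      ≤ C * (1 / l * ∫ ω, |(μ[S | MeasurableSpace.comap W inferInstance]) ω| ∂μ) := by
    rw [abs_mul, abs_of_pos (by positivity)]
    refine (mul_le_mul_of_nonneg_left (hswap.trans
      (mul_le_mul_of_nonneg_left hremainder zero_le_two)) (by positivity)).trans_eq ?_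
    field_simp
  have hdecomp : ∫ ω, f' (W ω) ∂μ - ∫ ω, f (W ω) * W ω ∂μ =
      (∫ ω, f' (W ω) ∂μ - 1 / (2 * l) * ∫ ω, f' (W ω) * T ω ∂μ)
        - 1 / (2 * l) * (2 * ∫ ω, f (W ω) * D ω ∂μ - ∫ ω, f' (W ω) * T ω ∂μ)
        + ∫ ω, f (W ω) * R ω ∂μ := by
    rw [hregression]
    field_simp
    ring
  rw [hdecomp]
  exact (abs_add_le _ _).trans
    (add_le_add ((abs_sub _ _).trans (add_le_add hmain hscaled)) herror)

end ConditionalExpectation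

section ExchangeablePair

variable {Ω 𝒳 : Type*} [MeasurableSpace 𝒳] {m mΩ : MeasurableSpace Ω} {μ : Measure Ω}
  {X X' : Ω → 𝒳} {F Fstar : 𝒳 → 𝒳 → ℝ} {u : 𝒳 → ℝ} {φ : 𝒳 → ℝ} {f f' K : ℝ → ℝ}

lemma identDistrib_swap_mul_antisymm
    (hexch : IdentDistrib (fun ω ↦ (X ω, X' ω)) (fun ω ↦ (X' ω, X ω)) μ μ)
    (hF : Measurable (Function.uncurry F)) (hanti : ∀ x x', F x x' = -F x' x)
    (hu : Measurable u) :
    IdentDistrib (fun ω ↦ u (X' ω) * F (X ω) (X' ω)) (fun ω ↦ -(u (X ω) * F (X ω) (X' ω)))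
      μ μ := by
  have hcomp := hexch.comp (u := fun p ↦ u p.2 * Function.uncurry F p)
    ((hu.comp measurable_snd).mul hF)
  have hswap : (fun ω ↦ -(u (X ω) * F (X ω) (X' ω))) = fun ω ↦ u (X ω) * F (X' ω) (X ω) :=
    funext fun ω ↦ by rw [hanti (X' ω) (X ω), mul_neg]
  rw [hswap]
  exact hcomp

lemma integrable_swap_mul_antisymm
    (hexch : IdentDistrib (fun ω ↦ (X ω, X' ω)) (fun ω ↦ (X' ω, X ω)) μ μ)
    (hF : Measurable (Function.uncurry F)) (hanti : ∀ x x', F x x' = -F x' x)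
    (hu : Measurable u) (hint : Integrable (fun ω ↦ u (X ω) * F (X ω) (X' ω)) μ) :
    Integrable (fun ω ↦ u (X' ω) * F (X ω) (X' ω)) μ :=
  (identDistrib_swap_mul_antisymm hexch hF hanti hu).integrable_iff.2 hint.neg

lemma integral_sub_swap_mul_antisymm
    (hexch : IdentDistrib (fun ω ↦ (X ω, X' ω)) (fun ω ↦ (X' ω, X ω)) μ μ)
    (hF : Measurable (Function.uncurry F)) (hanti : ∀ x x', F x x' = -F x' x)
    (hu : Measurable u) (hint : Integrable (fun ω ↦ u (X ω) * F (X ω) (X' ω)) μ) :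
    ∫ ω, (u (X ω) - u (X' ω)) * F (X ω) (X' ω) ∂μ = 2 * ∫ ω, u (X ω) * F (X ω) (X' ω) ∂μ := by
  simp only [sub_mul]
  rw [integral_sub hint (integrable_swap_mul_antisymm hexch hF hanti hu hint),
    (identDistrib_swap_mul_antisymm hexch hF hanti hu).integral_eq, integral_neg]
  ring

lemma abs_two_mul_integral_sub_integral_le
    (hexch : IdentDistrib (fun ω ↦ (X ω, X' ω)) (fun ω ↦ (X' ω, X ω)) μ μ)
    (hφ : Measurable φ) (hF : Measurable (Function.uncurry F))
    (hFstar : Measurable (Function.uncurry Fstar)) (hanti : ∀ x x', F x x' = -F x' x)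
    (hsymm : ∀ x x', Fstar x x' = Fstar x' x)
    (hge : ∀ᵐ ω ∂μ, |F (X ω) (X' ω)| ≤ Fstar (X ω) (X' ω))
    (hf : Measurable f) (hK : Measurable K)
    (htaylor : ∀ v w, |f w - f v - (w - v) * f' w| ≤ (w - v) * (K w - K v))
    (hfD : Integrable (fun ω ↦ f (φ (X ω)) * F (X ω) (X' ω)) μ)
    (hf'D : Integrable
      (fun ω ↦ f' (φ (X ω)) * (F (X ω) (X' ω) * (φ (X ω) - φ (X' ω)))) μ)
    (hKD : Integrable
      (fun ω ↦ K (φ (X ω)) * (Fstar (X ω) (X' ω) * (φ (X ω) - φ (X' ω)))) μ) :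
    |2 * ∫ ω, f (φ (X ω)) * F (X ω) (X' ω) ∂μ
        - ∫ ω, f' (φ (X ω)) * (F (X ω) (X' ω) * (φ (X ω) - φ (X' ω))) ∂μ|
      ≤ 2 * ∫ ω, K (φ (X ω)) * (Fstar (X ω) (X' ω) * (φ (X ω) - φ (X' ω))) ∂μ := by
  have hfφ := hf.comp hφ
  have hKφ := hK.comp hφ
  let G : 𝒳 → 𝒳 → ℝ := fun x x' ↦ Fstar x x' * (φ x - φ x')
  have hG : Measurable (Function.uncurry G) :=
    hFstar.mul ((hφ.comp measurable_fst).sub (hφ.comp measurable_snd))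
  have hGanti (x x' : 𝒳) : G x x' = -G x' x := by
    simp only [G, hsymm x x']
    ring
  have hfdiff : Integrable (fun ω ↦ (f (φ (X ω)) - f (φ (X' ω))) * F (X ω) (X' ω)) μ := by
    simpa only [sub_mul] using! hfD.sub (integrable_swap_mul_antisymm hexch hF hanti hfφ hfD)
  have hKdiff : Integrable (fun ω ↦ (K (φ (X ω)) - K (φ (X' ω))) * G (X ω) (X' ω)) μ := by
    simpa only [sub_mul] using! hKD.sub (integrable_swap_mul_antisymm hexch hG hGanti hKφ hKD)
  have hfswap := integral_sub_swap_mul_antisymm hexch hF hanti hfφ hfD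
  have hKswap := integral_sub_swap_mul_antisymm hexch hG hGanti hKφ hKD
  simp only [Function.comp_apply] at hfswap hKswap
  rw [← hfswap, ← hKswap, ← integral_sub hfdiff hf'D, ← Real.norm_eq_abs]
  refine norm_integral_le_of_norm_le hKdiff ?_
  filter_upwards [hge] with ω hω
  calc ‖(f (φ (X ω)) - f (φ (X' ω))) * F (X ω) (X' ω)
          - f' (φ (X ω)) * (F (X ω) (X' ω) * (φ (X ω) - φ (X' ω)))‖
      = |F (X ω) (X' ω)| * |f (φ (X ω)) - f (φ (X' ω))
          - (φ (X ω) - φ (X' ω)) * f' (φ (X ω))| := by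
        rw [Real.norm_eq_abs, ← abs_mul]
        ring_nf
    _ ≤ Fstar (X ω) (X' ω)
          * ((φ (X ω) - φ (X' ω)) * (K (φ (X ω)) - K (φ (X' ω)))) :=
        mul_le_mul hω (htaylor _ _) (abs_nonneg _) ((abs_nonneg _).trans hω)
    _ = (K (φ (X ω)) - K (φ (X' ω))) * G (X ω) (X' ω) := by ring

end ExchangeablePair

lemma measureReal_le_sub_stdNormalCDF_eq {Ω : Type*} [MeasurableSpace Ω] {μ : Measure Ω}
    [IsProbabilityMeasure μ] {W : Ω → ℝ} (hW : Measurable W) (hWint : Integrable W μ) (z : ℝ) :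
    μ.real {ω | W ω ≤ z} - stdNormalCDF z =
      ∫ ω, steinDeriv z (W ω) ∂μ - ∫ ω, steinSolution z (W ω) * W ω ∂μ := by
  have hderiv : Integrable (fun ω ↦ steinDeriv z (W ω)) μ :=
    .of_bound ((measurable_steinDeriv z).comp hW).aestronglyMeasurable 1
      (ae_of_all _ fun ω ↦ abs_steinDeriv_le_one z _)
  have hmul : Integrable (fun ω ↦ steinSolution z (W ω) * W ω) μ :=
    hWint.bdd_mul ((continuous_steinSolution z).measurable.comp hW).aestronglyMeasurable
      (ae_of_all _ fun ω ↦ abs_steinSolution_le_one z _)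
  have hset : MeasurableSet {ω | W ω ≤ z} := hW measurableSet_Iic
  have hequation (ω : Ω) : steinDeriv z (W ω) - steinSolution z (W ω) * W ω =
      {ω | W ω ≤ z}.indicator 1 ω - stdNormalCDF z := by
    simp only [steinDeriv, indicator_apply, mem_Iic, mem_ofPred_eq, Pi.one_apply]
    ring
  rw [← integral_sub hderiv hmul, integral_congr_ae (ae_of_all _ hequation),
    integral_sub ((integrable_const 1).indicator hset) (integrable_const _),
    integral_indicator_one hset, integral_const, probReal_univ, one_smul]

theorem stmt3_general {Ω 𝒳 : Type*} [MeasurableSpace 𝒳] {m mΩ : MeasurableSpace Ω}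
    (μ : Measure Ω) [IsProbabilityMeasure μ] {X X' : Ω → 𝒳} (hm : m ≤ mΩ)
    (hX : Measurable[m] X) (hX' : Measurable X')
    (hexch : Measure.map (fun ω ↦ (X ω, X' ω)) μ = Measure.map (fun ω ↦ (X' ω, X ω)) μ)
    {φ : 𝒳 → ℝ} (hφ : Measurable φ) {F Fstar : 𝒳 → 𝒳 → ℝ}
    (hF : Measurable (Function.uncurry F)) (hFstar : Measurable (Function.uncurry Fstar))
    (hanti : ∀ x x', F x x' = -F x' x) (hsymm : ∀ x x', Fstar x x' = Fstar x' x)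
    (hge : ∀ᵐ ω ∂μ, |F (X ω) (X' ω)| ≤ Fstar (X ω) (X' ω))
    {R : Ω → ℝ} {l : ℝ} (hl : 0 < l)
    (hlin : μ[fun ω ↦ F (X ω) (X' ω) | m] =ᵐ[μ] fun ω ↦ l * (φ (X ω) + R ω))
    (hD : Integrable (fun ω ↦ F (X ω) (X' ω)) μ) (hR : Integrable R μ)
    (hDstarΔ : Integrable (fun ω ↦ Fstar (X ω) (X' ω) * (φ (X ω) - φ (X' ω))) μ) (z : ℝ) :
    |μ.real {ω | φ (X ω) ≤ z} - stdNormalCDF z| ≤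
      (∫ ω, |1 - 1 / (2 * l) * (μ[fun ω ↦ F (X ω) (X' ω) * (φ (X ω) - φ (X' ω)) |
          MeasurableSpace.comap (fun ω ↦ φ (X ω)) inferInstance]) ω| ∂μ)
        + 1 / l * (∫ ω, |(μ[fun ω ↦ Fstar (X ω) (X' ω) * (φ (X ω) - φ (X' ω)) |
          MeasurableSpace.comap (fun ω ↦ φ (X ω)) inferInstance]) ω| ∂μ)
        + ∫ ω, |R ω| ∂μ := by
  have hWm : Measurable[m] fun ω ↦ φ (X ω) := hφ.comp hX
  have hW : Measurable fun ω ↦ φ (X ω) := hWm.mono hm le_rfl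
  have hf := (continuous_steinSolution z).measurable
  have hDΔ : Integrable (fun ω ↦ F (X ω) (X' ω) * (φ (X ω) - φ (X' ω))) μ := by
    refine hDstarΔ.mono
      (hD.aestronglyMeasurable.mul (hW.sub (hφ.comp hX')).aestronglyMeasurable) ?_
    filter_upwards [hge] with ω hω
    rw [norm_mul, norm_mul]
    exact mul_le_mul_of_nonneg_right (hω.trans (le_abs_self _)) (norm_nonneg _)
  have hpair : IdentDistrib (fun ω ↦ (X ω, X' ω)) (fun ω ↦ (X' ω, X ω)) μ μ :=
    ⟨((hX.mono hm le_rfl).prodMk hX').aemeasurable,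
      (hX'.prodMk (hX.mono hm le_rfl)).aemeasurable, hexch⟩
  have hswap := abs_two_mul_integral_sub_integral_le hpair hφ hF hFstar hanti hsymm hge hf
    (measurable_steinEnvelope z) (abs_steinSolution_sub_sub_mul_le z)
    (hD.bdd_mul (hf.comp hW).aestronglyMeasurable
      (ae_of_all _ fun ω ↦ abs_steinSolution_le_one z _))
    (hDΔ.bdd_mul ((measurable_steinDeriv z).comp hW).aestronglyMeasurable
      (ae_of_all _ fun ω ↦ abs_steinDeriv_le_one z _))
    (hDstarΔ.bdd_mul ((measurable_steinEnvelope z).comp hW).aestronglyMeasurable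
      (ae_of_all _ fun ω ↦ abs_steinEnvelope_le_one z _))
  rw [measureReal_le_sub_stdNormalCDF_eq hW
    (integrable_of_condExp_eq_const_mul_add hl.ne' hlin hR)]
  simpa only [one_mul] using abs_integral_sub_integral_mul_le_of_condExp hm hWm hl hlin hD hR
    hDΔ hDstarΔ hf (measurable_steinDeriv z) (measurable_steinEnvelope z)
    (abs_steinSolution_le_one z) (abs_steinDeriv_le_one z) (abs_steinEnvelope_le_one z) hswap

/-- **Theorem 4.1.** Under condition (A) (`E[D|X] = λ(W+R)`, `D = F(X,X')`
antisymmetric, `(X,X')` exchangeable), with `Δ = W - W'`, `D* = F*(X,X')` symmetric and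
`D* ≥ |D|`:
`sup_z |P(W ≤ z) - Φ(z)| ≤ E|1 - (1/(2λ)) E[DΔ | W]| + (1/λ) E|E[D*Δ | W]| + E|R|`. -/
theorem stmt3
    {Ω 𝒳 : Type*} [MeasurableSpace Ω] [MeasurableSpace 𝒳]
    (μ : Measure Ω) [IsProbabilityMeasure μ]
    (X X' : Ω → 𝒳) (hX : Measurable X) (hX' : Measurable X')
    (hexch : Measure.map (fun ω => (X ω, X' ω)) μ
      = Measure.map (fun ω => (X' ω, X ω)) μ)
    (φ : 𝒳 → ℝ) (hφ : Measurable φ)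
    (F Fstar : 𝒳 → 𝒳 → ℝ)
    (hF : Measurable (Function.uncurry F))
    (hFstar : Measurable (Function.uncurry Fstar))
    (hanti : ∀ x x', F x x' = - F x' x)
    (hsymm : ∀ x x', Fstar x x' = Fstar x' x)
    (W W' D Dstar Δ R : Ω → ℝ)
    (hW : W = fun ω => φ (X ω)) (hW' : W' = fun ω => φ (X' ω))
    (hD : D = fun ω => F (X ω) (X' ω))
    (hDstar : Dstar = fun ω => Fstar (X ω) (X' ω))
    (hΔ : Δ = fun ω => W ω - W' ω)
    (hge : ∀ᵐ ω ∂μ, |D ω| ≤ Dstar ω)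
    (hW0 : ∫ ω, W ω ∂μ = 0) (hW2 : ∫ ω, (W ω) ^ 2 ∂μ = 1)
    (l : ℝ) (hl : 0 < l)
    (hlin : μ[D | MeasurableSpace.comap X inferInstance]
      =ᵐ[μ] fun ω => l * (W ω + R ω))
    (hDint : Integrable D μ) (hRint : Integrable R μ)
    (hDΔint : Integrable (fun ω => D ω * Δ ω) μ)
    (hDsΔint : Integrable (fun ω => Dstar ω * Δ ω) μ) :
    ∀ z : ℝ,
      |(μ {ω | W ω ≤ z}).toReal - stdNormalCDF z|
        ≤ (∫ ω, |1 - (1 / (2 * l)) *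
              (μ[fun ω' => D ω' * Δ ω' | MeasurableSpace.comap W inferInstance]) ω| ∂μ)
          + (1 / l) * (∫ ω,
              |(μ[fun ω' => Dstar ω' * Δ ω' | MeasurableSpace.comap W inferInstance]) ω| ∂μ)
          + ∫ ω, |R ω| ∂μ := by
  intro z
  subst hW hW' hD hDstar hΔ
  exact stmt3_general μ hX.comap_le (comap_measurable X) hX' hexch hφ hF hFstar hanti hsymm hge hl
    hlin hDint hRint hDsΔint z
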